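/- Let n ≥ 1 and 1 ≤ k ≤ n. For every ν ∈ B(A_n,k) with ν ≠ μ̄, writing μ̄ − ν = Σ_{i=1}^n d_i α_i^∨, one has d_k ≥ 1/2; consequently (μ̄ − (1/2)α_k^∨) − ν is a nonnegative rational combination of the simple coroots α_1^∨,…,α_n^∨, i.e. μ̄ − (1/2)α_k^∨ is the greatest element of B(A_n,k) ∖ {μ̄} in the dominance order. -/

import Mathlib

open Finset

/-- The Galois average `μ̄` of the minuscule cocharacter at the (1-indexed) node `k` in
type `A_n`, viewed as the fundamental coweight in `ℚ^{n+1}`: the coordinate `j : Fin (n+1)`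
corresponds to the 1-indexed coordinate `j + 1`, and
`μ̄ = Σ_{j=1}^{k} e_j − (k/(n+1)) Σ_{j=1}^{n+1} e_j`. -/
def muA (n k : ℕ) : Fin (n + 1) → ℚ :=
  fun j => (if (j : ℕ) + 1 ≤ k then 1 else 0) - (k : ℚ) / (n + 1)

/-- The simple coroot `α_{i+1}^∨ = e_{i+1} − e_{i+2}` (1-indexed) of type `A_n`. -/
def corootA (n : ℕ) (i : Fin n) : Fin (n + 1) → ℚ :=
  fun j => (if (j : ℕ) = (i : ℕ) then 1 else 0) - (if (j : ℕ) = (i : ℕ) + 1 then 1 else 0)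

/-- The Chen–Fargues–Shen description of the Kottwitz set `B(A_n, k)`: vectors `ν ∈ ℚ^{n+1}`
such that (i) `ν` is dominant, (ii) `μ̄ − ν = Σ_i d_i α_i^∨` with all `d_i ≥ 0`, and
(iii) `d_i ∈ ℤ` whenever `ν_i ≠ ν_{i+1}`. -/
def BsetA (n k : ℕ) : Set (Fin (n + 1) → ℚ) :=
  {ν | (∀ i : Fin n, ν i.succ ≤ ν i.castSucc) ∧
    ∃ d : Fin n → ℚ, (∀ i, 0 ≤ d i) ∧
      (∀ j, muA n k j - ν j = ∑ i : Fin n, d i * corootA n i j) ∧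
      (∀ i : Fin n, ν i.castSucc ≠ ν i.succ → ∃ m : ℤ, d i = (m : ℚ))}

/-- Extension of the coefficients by zero, 1-indexed. -/
def extA (n : ℕ) (e : Fin n → ℚ) (m : ℕ) : ℚ :=
  if h : 1 ≤ m ∧ m ≤ n then e ⟨m - 1, by omega⟩ else 0

lemma sum_extA (n : ℕ) (e : Fin n → ℚ) (j : Fin (n + 1)) :
    ∑ i : Fin n, e i * corootA n i j = extA n e (j + 1) - extA n e j := by
  have h1 : ∑ i : Fin n, e i * (if (j : ℕ) = (i : ℕ) then (1 : ℚ) else 0)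
      = extA n e (j + 1) := by
    unfold extA
    split_ifs with h
    · rw [Finset.sum_eq_single ⟨(j : ℕ), by omega⟩]
      · simp
      · intro b _ hb
        rw [if_neg (fun hh => hb (Fin.ext hh.symm)), mul_zero]
      · simp
    · apply Finset.sum_eq_zero
      intro i _
      rw [if_neg (by have := i.2; omega), mul_zero]
  have h2 : ∑ i : Fin n, e i * (if (j : ℕ) = (i : ℕ) + 1 then (1 : ℚ) else 0)
      = extA n e j := by
    unfold extA
    split_ifs with h
    · rw [Finset.sum_eq_single ⟨(j : ℕ) - 1, by omega⟩]
      · rw [if_pos (by simp; omega), mul_one]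
      · intro b _ hb
        rw [if_neg (fun hh => hb (Fin.ext (by simp; omega))), mul_zero]
      · simp
    · apply Finset.sum_eq_zero
      intro i _
      rw [if_neg (by have := i.2; have := j.2; omega), mul_zero]
  rw [← h1, ← h2, ← Finset.sum_sub_distrib]
  simp only [corootA, mul_sub]

lemma extA_succ (n : ℕ) (e : Fin n → ℚ) (i : Fin n) : extA n e (i + 1) = e i := by
  unfold extA
  rw [dif_pos ⟨by omega, by have := i.2; omega⟩]
  simp

lemma extA_zero (n : ℕ) (e : Fin n → ℚ) : extA n e 0 = 0 := by simp [extA]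

lemma extA_last (n : ℕ) (e : Fin n → ℚ) : extA n e (n + 1) = 0 := by simp [extA]

lemma coroot_unique (n : ℕ) (d e : Fin n → ℚ)
    (h : ∀ j, ∑ i : Fin n, d i * corootA n i j = ∑ i : Fin n, e i * corootA n i j) :
    d = e := by
  have key : ∀ m, m ≤ n → extA n d m = extA n e m := by
    intro m
    induction m with
    | zero => intro _; rw [extA_zero, extA_zero]
    | succ m ih =>
      intro hm
      have := h ⟨m, by omega⟩
      rw [sum_extA, sum_extA] at this
      have h2 := ih (by omega)
      simp only at this
      linarith
  funext i
  rw [← extA_succ n d i, ← extA_succ n e i]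
  exact key _ i.2

/-- Type `A_n`, `1 ≤ k ≤ n`: for every `ν ∈ B(A_n, k)` with `ν ≠ μ̄`, writing
`μ̄ − ν = Σ_i d_i α_i^∨` one has `d_k ≥ 1/2`, and consequently
`(μ̄ − (1/2) α_k^∨) − ν` is a nonnegative rational combination of the simple coroots,
i.e. `μ̄ − (1/2) α_k^∨` is the greatest element of `B(A_n, k) ∖ {μ̄}` in the dominance order. -/
theorem muA_sub_half_coroot_maximal (n k : ℕ) (hn : 1 ≤ n) (hk1 : 1 ≤ k) (hkn : k ≤ n) :
    ∀ ν ∈ BsetA n k, ν ≠ muA n k →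
      ∀ d : Fin n → ℚ,
        (∀ j, muA n k j - ν j = ∑ i : Fin n, d i * corootA n i j) →
        1 / 2 ≤ d ⟨k - 1, by omega⟩ ∧
        ∃ c : Fin n → ℚ, (∀ i, 0 ≤ c i) ∧
          ∀ j, (muA n k j - (1 / 2) * corootA n ⟨k - 1, by omega⟩ j) - ν j
            = ∑ i : Fin n, c i * corootA n i j := by
  intro ν hν hne d hd
  obtain ⟨hdom, d', hd0, hd', hint⟩ := hν
  obtain rfl : d = d' := coroot_unique n d d' (fun j => by rw [← hd j, ← hd' j])
  clear hd'
  have hν : ∀ m (hm : m < n + 1), ν ⟨m, hm⟩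
      = (if m + 1 ≤ k then 1 else 0) - (k : ℚ) / (n + 1) - (extA n d (m + 1) - extA n d m) := by
    intro m hm
    have := hd ⟨m, hm⟩
    rw [sum_extA] at this
    simp only [muA] at this
    linarith
  have hDnn : ∀ m, 0 ≤ extA n d m := by
    intro m
    unfold extA
    split_ifs
    · exact hd0 _
    · exact le_rfl
  have hconv : ∀ m, m < n → m + 1 ≠ k →
      2 * extA n d (m + 1) ≤ extA n d m + extA n d (m + 2) := by
    intro m hm hmk
    have h1 := hdom ⟨m, hm⟩
    have h2 := hν m (by omega)
    have h3 := hν (m + 1) (by omega)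
    simp only [Fin.succ_mk, Fin.castSucc_mk] at h1
    rw [h2, h3] at h1
    have : (m + 1 + 1 ≤ k) = (m + 1 ≤ k) := by
      apply propext; omega
    simp only [this] at h1
    linarith
  have hDk : extA n d k = d ⟨k - 1, by omega⟩ := by
    rw [← extA_succ n d]
    congr 1
    simp; omega
  have hhalf : 1 / 2 ≤ d ⟨k - 1, by omega⟩ := by
    by_cases heq : ν (Fin.castSucc ⟨k - 1, by omega⟩) = ν (Fin.succ ⟨k - 1, by omega⟩)
    · obtain ⟨l, rfl⟩ : ∃ l, k = l + 1 := ⟨k - 1, by omega⟩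
      have h2 := hν l (by omega)
      have h3 := hν (l + 1) (by omega)
      simp only [Fin.succ_mk, Fin.castSucc_mk, Nat.add_sub_cancel] at heq
      rw [h2, h3, if_pos le_rfl, if_neg (by omega)] at heq
      have a1 := hDnn l
      have a2 := hDnn (l + 1 + 1)
      rw [← hDk]
      linarith
    · obtain ⟨z, hz⟩ := hint _ heq
      have hz0 : 0 ≤ z := by
        have := hd0 ⟨k - 1, by omega⟩
        rw [hz] at this
        exact_mod_cast this
      rcases hz0.lt_or_eq with hpos | hzero
      · have : (1 : ℚ) ≤ z := by exact_mod_cast hpos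
        rw [hz]; linarith
      · exfalso
        have hk0 : extA n d k = 0 := by rw [hDk, hz, ← hzero]; simp
        have hup : ∀ m, m < k → extA n d m ≤ extA n d (m + 1) := by
          intro m
          induction m with
          | zero => intro _; rw [extA_zero]; exact hDnn _
          | succ m ih =>
            intro hm
            have a1 := ih (by omega)
            have a2 := hconv m (by omega) (by omega)
            have a3 : extA n d (m + 1 + 1) = extA n d (m + 2) := rfl
            linarith
        have hupz : ∀ t m, m + t = k → extA n d m = 0 := by
          intro t
          induction t with
          | zero => intro m hm; rw [← hk0, ← hm]; rfl
          | succ t ih =>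
            intro m hm
            have a1 := ih (m + 1) (by omega)
            have a2 := hup m (by omega)
            have a3 := hDnn m
            linarith
        have hdown : ∀ t m, m + t = n → k ≤ m → extA n d (m + 1) ≤ extA n d m := by
          intro t
          induction t with
          | zero =>
            intro m hm _
            have : m = n := by omega
            subst this
            rw [extA_last]; exact hDnn _
          | succ t ih =>
            intro m hm hkm
            have a1 := ih (m + 1) (by omega) (by omega)
            have a2 := hconv m (by omega) (by omega)
            have a3 : extA n d (m + 1 + 1) = extA n d (m + 2) := rfl
            linarith
        have hdownz : ∀ t, k + t ≤ n + 1 → extA n d (k + t) = 0 := by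
          intro t
          induction t with
          | zero => intro _; exact hk0
          | succ t ih =>
            intro ht
            have a1 := ih (by omega)
            have a2 := hdown (n - (k + t)) (k + t) (by omega) (by omega)
            have a3 := hDnn (k + t + 1)
            have a4 : extA n d (k + (t + 1)) = extA n d (k + t + 1) := rfl
            linarith
        have hall : ∀ m, m ≤ n + 1 → extA n d m = 0 := by
          intro m hm
          rcases le_total m k with h | h
          · exact hupz (k - m) m (by omega)
          · have := hdownz (m - k) (by omega)
            rwa [show k + (m - k) = m by omega] at this
        apply hne
        funext j
        have := hd j
        rw [sum_extA, hall _ (by have := j.2; omega), hall _ (by have := j.2; omega)] at this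
        linarith
  refine ⟨hhalf, fun i => d i - if i = ⟨k - 1, by omega⟩ then 1 / 2 else 0, ?_, ?_⟩
  · intro i
    simp only
    split_ifs with h
    · rw [h]; linarith
    · rw [sub_zero]; exact hd0 i
  · intro j
    have := hd j
    simp only [sub_mul, Finset.sum_sub_distrib, ite_mul, zero_mul, Finset.sum_ite_eq',
      Finset.sum_ite_eq, Finset.mem_univ, if_true]
    linarith
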